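/- arXiv:2501.10986 — 10 statements merged into one kernel-verified Lean document; each statement's English description precedes it below -/
import Mathlib

section
/- Let X be a finite set of alternatives with |X| = m ≥ 3 and let N(n) = {1,…,n} with n ≥ 2 be the set of states of nature. A choice function f on the set L^{N(n)} of all preference profiles satisfies the Weak Dominance Criterion (WDC) and Global Independence of Irrelevant Alternatives (GIIA) if and only if f is a state-salient decision rule (S-SDR). -/
/-!
The nontrivial direction is an Arrow-type argument on decisive sets of states. Call `S` decisive
for `(x, y)` if `y` is rejected at every profile where `S` is exactly the set of states preferring
`x` to `y` (`Decisive`). GIIA says that a single profile with this pattern at which `x` is chosen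
and `y` is not already makes `S` decisive. To produce such profiles, three alternatives are put on
top in every state (`topRanking`); by WDC nothing else can be chosen then, so rejecting two of the
three forces the choice of the third.

In this way decisiveness for one pair spreads to all pairs (`Decisive.spread`), passes to supersets
(`Decisive.mono`), and whenever a disjoint union is decisive so is one of its two parts
(`Decisive.split`). The set of all states is decisive by WDC and the empty set is not, so a minimal
decisive set is a singleton `{i}`, and `i` is the salient state. Ties in the choice set need no
separate treatment, since every step only uses that some alternative is chosen.

Conversely, under a state-salient rule every chosen alternative is the top of the salient state's
ranking, whence both axioms.
-/

/-- A strict ranking on `X`: a reflexive, total, transitive, antisymmetric binary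
relation (i.e. a linear order relation) on `X`. -/
abbrev Ranking (X : Type*) := {r : X → X → Prop // IsLinearOrder X r}

/-- A (state-dependent) preference profile: an assignment of a strict ranking to
each of the `n` states of nature. -/
abbrev Profile (X : Type*) (n : ℕ) := Fin n → Ranking X

/-- The rank of `x` at a strict ranking `r`: the number of alternatives `y`
with `y r x` (the top alternative has rank 1, since `r` is reflexive). -/
noncomputable def rk {X : Type*} (r : Ranking X) (x : X) : ℕ :=
  Set.ncard {y | r.1 y x}

/-- Weak Dominance Criterion. -/
def WDC {X : Type*} {n : ℕ} (f : Profile X n → Set X) : Prop :=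
  ∀ x y : X, x ≠ y → ∀ R : Profile X n, (∀ i, (R i).1 x y) → y ∉ f R

/-- Global Independence of Irrelevant Alternatives (on the full domain). -/
def GIIA {X : Type*} {n : ℕ} (f : Profile X n → Set X) : Prop :=
  ∀ R R' : Profile X n, ∀ x y : X, x ≠ y →
    (∀ i, (R i).1 x y ↔ (R' i).1 x y) → x ∈ f R → y ∉ f R → y ∉ f R'

/-- Global Independence of Irrelevant Alternatives restricted to a domain `D`. -/
def GIIAon {X : Type*} {n : ℕ} (D : Set (Profile X n)) (f : Profile X n → Set X) : Prop :=
  ∀ R ∈ D, ∀ R' ∈ D, ∀ x y : X, x ≠ y →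
    (∀ i, (R i).1 x y ↔ (R' i).1 x y) → x ∈ f R → y ∉ f R → y ∉ f R'

/-- State-salient decision rule: some state of nature decides the outcome. -/
def SSDR {X : Type*} {n : ℕ} (f : Profile X n → Set X) : Prop :=
  ∃ i : Fin n, ∀ x y : X, x ≠ y → ∀ R : Profile X n, (R i).1 x y → y ∉ f R

/-- Weak Monotonicity. -/
def WeakMono {X : Type*} {n : ℕ} (f : Profile X n → Set X) : Prop :=
  ∀ R R' : Profile X n, ∀ x : X, x ∈ f R →
    (∀ y : X, y ≠ x → {i : Fin n | (R i).1 x y} ⊆ {i : Fin n | (R' i).1 x y}) →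
    x ∈ f R'

/-- Resolute for Pairs. -/
def ResoluteForPairs {X : Type*} {n : ℕ} (f : Profile X n → Set X) : Prop :=
  ∀ R : Profile X n, ∀ x y : X, x ≠ y →
    (∀ i, (rk (R i) x = 1 ∨ rk (R i) x = 2) ∧ (rk (R i) y = 1 ∨ rk (R i) y = 2)) →
    f R = {x} ∨ f R = {y}

/-- Down Monotonicity. -/
def DownMono {X : Type*} {n : ℕ} (f : Profile X n → Set X) : Prop :=
  ∀ R R' : Profile X n, ∀ i : Fin n, ∀ x : X, x ∈ f R → ∀ y : X, y ≠ x →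
    (∀ j, j ≠ i → R j = R' j) →
    (∀ a b : X, a ≠ y → b ≠ y → ((R i).1 a b ↔ (R' i).1 a b)) →
    rk (R' i) y = rk (R i) y + 1 →
    x ∈ f R'

/-- `x` is a strict Condorcet-winner at the profile `R`. -/
def SCWinner {X : Type*} {n : ℕ} (R : Profile X n) (x : X) : Prop :=
  ∀ y : X, y ≠ x →
    Set.ncard {i : Fin n | (R i).1 y x} < Set.ncard {i : Fin n | (R i).1 x y}

/-- `x` is a strict Condorcet-loser at the profile `R`. -/
def SCLoser {X : Type*} {n : ℕ} (R : Profile X n) (x : X) : Prop :=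
  ∀ y : X, y ≠ x →
    Set.ncard {i : Fin n | (R i).1 x y} < Set.ncard {i : Fin n | (R i).1 y x}

/-- `x` is a weak Condorcet-winner at `R`: it is preferred to every other
alternative in at least `n / 2` states (i.e. `n ≤ 2 * #{i | x Rᵢ y}`). -/
def WCWinner {X : Type*} {n : ℕ} (R : Profile X n) (x : X) : Prop :=
  ∀ y : X, y ≠ x → n ≤ 2 * Set.ncard {i : Fin n | (R i).1 x y}

/-- Most Probable at the Top, on a domain `D`. -/
def MPT {X : Type*} {n : ℕ} (D : Set (Profile X n)) (f : Profile X n → Set X) : Prop :=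
  ∀ R ∈ D, ∀ x y : X, x ≠ y →
    (∀ i, ∀ w : X, w ≠ x → w ≠ y → (R i).1 x w ∧ (R i).1 y w) →
    Set.ncard {i : Fin n | (R i).1 y x} < Set.ncard {i : Fin n | (R i).1 x y} →
    f R = {x}

/-- The Borda score of `x` at the profile `R` (with `m = |X|`). -/
noncomputable def BS {X : Type*} [Fintype X] {n : ℕ} (R : Profile X n) (x : X) : ℕ :=
  ∑ i : Fin n, (Fintype.card X + 1 - rk (R i) x)

/-- The plurality score of `x` at `R`: the number of states where `x` is ranked first. -/
noncomputable def pluralityScore {X : Type*} {n : ℕ} (R : Profile X n) (x : X) : ℕ :=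
  Set.ncard {i : Fin n | rk (R i) x = 1}

/-- `x` is the unique plurality winner at `R`. -/
def UniquePlurality {X : Type*} {n : ℕ} (R : Profile X n) (x : X) : Prop :=
  (∀ z : X, pluralityScore R z ≤ pluralityScore R x) ∧
  (∀ z : X, (∀ w : X, pluralityScore R w ≤ pluralityScore R z) → z = x)


/-- Position of an alternative in the ranking with `a`, `b`, `c` on top in this order and the
remaining alternatives below, in the order of a fixed enumeration of `X`. -/
noncomputable def topKey {X : Type*} [Fintype X] (a b c w : X) : ℕ :=
  open Classical in
  if w = a then 0 else if w = b then 1 else if w = c then 2 else 3 + (Fintype.equivFin X w : ℕ)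

theorem topKey_injective {X : Type*} [Fintype X] (a b c : X) :
    Function.Injective (topKey a b c) := by
  intro u v h
  unfold topKey at h
  split_ifs at h <;> first
    | omega
    | (subst_vars; rfl)
    | exact (Fintype.equivFin X).injective (Fin.ext (by omega))

/-- The strict ranking with `a`, `b`, `c` on top in this order. -/
noncomputable def topRanking {X : Type*} [Fintype X] (a b c : X) : Ranking X :=
  ⟨fun u v => topKey a b c u ≤ topKey a b c v,
    { refl := fun _ => le_rfl
      trans := fun _ _ _ h k => le_trans h k
      antisymm := fun _ _ h k => topKey_injective a b c (le_antisymm h k)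
      total := fun _ _ => le_total _ _ }⟩

theorem topRanking_iff {X : Type*} [Fintype X] (a b c u v : X) :
    (topRanking a b c).1 u v ↔ topKey a b c u ≤ topKey a b c v := Iff.rfl

/-- `S` is decisive for `x` against `y`: whenever `S` is exactly the set of states preferring `x`
to `y`, the alternative `y` is rejected. -/
def Decisive {X : Type*} {n : ℕ} (f : Profile X n → Set X) (S : Set (Fin n)) (x y : X) : Prop :=
  ∀ R : Profile X n, (∀ i, (R i).1 x y ↔ i ∈ S) → y ∉ f R

theorem Decisive.of_profile {X : Type*} {n : ℕ} {f : Profile X n → Set X} (hG : GIIA f)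
    {S : Set (Fin n)} {x y : X} (hxy : x ≠ y) (R : Profile X n)
    (hR : ∀ i, (R i).1 x y ↔ i ∈ S) (hx : x ∈ f R) (hy : y ∉ f R) : Decisive f S x y :=
  fun R' hR' => hG R R' x y hxy (fun i => (hR i).trans (hR' i).symm) hx hy

/-- If `x` is above everything outside `{x, y, z}` in every state, one of the three is chosen. -/
theorem chosen_of_top {X : Type*} [Fintype X] {n : ℕ} {f : Profile X n → Set X}
    (hf : ∀ R, (f R).Nonempty) (hW : WDC f) (x y z : X) (R : Profile X n)
    (hR : ∀ i w, w ≠ x → w ≠ y → w ≠ z → (R i).1 x w) : x ∈ f R ∨ y ∈ f R ∨ z ∈ f R := by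
  obtain ⟨w, hw⟩ := hf R
  by_cases hx : w = x
  · exact Or.inl (hx ▸ hw)
  by_cases hy : w = y
  · exact Or.inr (Or.inl (hy ▸ hw))
  by_cases hz : w = z
  · exact Or.inr (Or.inr (hz ▸ hw))
  exact absurd hw (hW x w (Ne.symm hx) R fun i => hR i w hx hy hz)

open Classical in
/-- In the profile used, `z` is below `y` in every state and `x` is above `z` exactly on `S`. -/
theorem Decisive.right {X : Type*} [Fintype X] {n : ℕ} {f : Profile X n → Set X}
    (hf : ∀ R, (f R).Nonempty) (hW : WDC f) (hG : GIIA f) {S : Set (Fin n)} {x y z : X}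
    (hxy : x ≠ y) (hxz : x ≠ z) (h : Decisive f S x y) : Decisive f S x z := by
  by_cases hyz : y = z
  · exact hyz ▸ h
  let R : Profile X n := fun i => if i ∈ S then topRanking x y z else topRanking y z x
  have hy : y ∉ f R := h R fun i => by
    by_cases hi : i ∈ S <;> simp [R, hi, topRanking_iff, topKey] <;> grind
  have hz : z ∉ f R := hW y z hyz R fun i => by
    by_cases hi : i ∈ S <;> simp [R, hi, topRanking_iff, topKey] <;> grind
  have hx : x ∈ f R := by
    have := chosen_of_top hf hW x y z R fun i w h1 h2 h3 => by
      by_cases hi : i ∈ S <;> simp [R, hi, topRanking_iff, topKey] <;> grind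
    tauto
  refine .of_profile hG hxz R (fun i => ?_) hx hz
  by_cases hi : i ∈ S <;> simp [R, hi, topRanking_iff, topKey] <;> grind

open Classical in
/-- In the profile used, `x` is below `z` in every state and `z` is above `y` exactly on `S`. -/
theorem Decisive.left {X : Type*} [Fintype X] {n : ℕ} {f : Profile X n → Set X}
    (hf : ∀ R, (f R).Nonempty) (hW : WDC f) (hG : GIIA f) {S : Set (Fin n)} {x y z : X}
    (hxy : x ≠ y) (hzy : z ≠ y) (h : Decisive f S x y) : Decisive f S z y := by
  by_cases hxz : x = z
  · exact hxz ▸ h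
  let R : Profile X n := fun i => if i ∈ S then topRanking z x y else topRanking y z x
  have hy : y ∉ f R := h R fun i => by
    by_cases hi : i ∈ S <;> simp [R, hi, topRanking_iff, topKey] <;> grind
  have hx : x ∉ f R := hW z x (Ne.symm hxz) R fun i => by
    by_cases hi : i ∈ S <;> simp [R, hi, topRanking_iff, topKey] <;> grind
  have hz : z ∈ f R := by
    have := chosen_of_top hf hW x y z R fun i w h1 h2 h3 => by
      by_cases hi : i ∈ S <;> simp [R, hi, topRanking_iff, topKey] <;> grind
    tauto
  refine .of_profile hG hzy R (fun i => ?_) hz hy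
  by_cases hi : i ∈ S <;> simp [R, hi, topRanking_iff, topKey] <;> grind

theorem exists_third {X : Type*} [Fintype X] (hX : 3 ≤ Fintype.card X) (x y : X) :
    ∃ z, x ≠ z ∧ y ≠ z := by
  classical
  obtain ⟨z, hz⟩ := Finset.exists_mem_notMem_of_card_lt_card (s := {x, y}) (t := Finset.univ)
    (lt_of_le_of_lt Finset.card_le_two (by rw [Finset.card_univ]; omega))
  simp only [Finset.mem_insert, Finset.mem_singleton, not_or] at hz
  exact ⟨z, Ne.symm hz.2.1, Ne.symm hz.2.2⟩

/-- Contagion: decisiveness for one pair gives decisiveness for every pair. -/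
theorem Decisive.spread {X : Type*} [Fintype X] {n : ℕ} (hX : 3 ≤ Fintype.card X)
    {f : Profile X n → Set X} (hf : ∀ R, (f R).Nonempty) (hW : WDC f) (hG : GIIA f)
    {S : Set (Fin n)} {x y : X} (hxy : x ≠ y) (h : Decisive f S x y) {a b : X} (hab : a ≠ b) :
    Decisive f S a b := by
  by_cases hay : a = y
  · subst hay
    obtain ⟨z, hxz, haz⟩ := exists_third hX x a
    exact ((h.right hf hW hG hxy hxz).left hf hW hG hxz haz).right hf hW hG haz hab
  · exact (h.left hf hW hG hxy hay).right hf hW hG hay hab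

open Classical in
/-- In the profile used, a third alternative `z` is above `y` in every state, `x` is above `z`
exactly on `S`, and `x` is above `y` exactly on `T`. -/
theorem Decisive.mono {X : Type*} [Fintype X] {n : ℕ} (hX : 3 ≤ Fintype.card X)
    {f : Profile X n → Set X} (hf : ∀ R, (f R).Nonempty) (hW : WDC f) (hG : GIIA f)
    {S T : Set (Fin n)} (hST : S ⊆ T) {x y : X} (hxy : x ≠ y) (h : Decisive f S x y) :
    Decisive f T x y := by
  obtain ⟨z, hxz, hyz⟩ := exists_third hX x y
  let R : Profile X n := fun i => if i ∈ S then topRanking x z y else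
    if i ∈ T then topRanking z x y else topRanking z y x
  have hz : z ∉ f R := h.right hf hW hG hxy hxz R fun i => by
    by_cases hi : i ∈ S <;> by_cases hj : i ∈ T <;>
      simp [R, hi, hj, topRanking_iff, topKey] <;> grind
  have hy : y ∉ f R := hW z y (Ne.symm hyz) R fun i => by
    by_cases hi : i ∈ S <;> by_cases hj : i ∈ T <;>
      simp [R, hi, hj, topRanking_iff, topKey] <;> grind
  have hx : x ∈ f R := by
    have := chosen_of_top hf hW x y z R fun i w h1 h2 h3 => by
      by_cases hi : i ∈ S <;> by_cases hj : i ∈ T <;>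
        simp [R, hi, hj, topRanking_iff, topKey] <;> grind
    tauto
  refine .of_profile hG hxy R (fun i => ?_) hx hy
  have := @hST i
  by_cases hi : i ∈ S <;> by_cases hj : i ∈ T <;>
    simp [R, hi, hj, topRanking_iff, topKey] <;> grind

open Classical in
/-- The two cases correspond to which of `x` and a third alternative `z` is chosen at a
Condorcet-type profile where `y` is rejected because `S` is decisive. -/
theorem Decisive.split {X : Type*} [Fintype X] {n : ℕ} (hX : 3 ≤ Fintype.card X)
    {f : Profile X n → Set X} (hf : ∀ R, (f R).Nonempty) (hW : WDC f) (hG : GIIA f)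
    {S A : Set (Fin n)} (hAS : A ⊆ S) {x y : X} (hxy : x ≠ y) (h : Decisive f S x y) :
    Decisive f A x y ∨ Decisive f (S \ A) x y := by
  obtain ⟨z, hxz, hyz⟩ := exists_third hX x y
  let R : Profile X n := fun i => if i ∈ A then topRanking x y z else
    if i ∈ S then topRanking z x y else topRanking y z x
  have hy : y ∉ f R := h R fun i => by
    have := @hAS i
    by_cases hi : i ∈ A <;> by_cases hj : i ∈ S <;>
      simp [R, hi, hj, topRanking_iff, topKey] <;> grind
  have hc := chosen_of_top hf hW x y z R fun i w h1 h2 h3 => by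
    by_cases hi : i ∈ A <;> by_cases hj : i ∈ S <;>
      simp [R, hi, hj, topRanking_iff, topKey] <;> grind
  by_cases hz : z ∈ f R
  · right
    refine Decisive.spread hX hf hW hG (Ne.symm hyz) (.of_profile hG (Ne.symm hyz) R ?_ hz hy) hxy
    intro i
    by_cases hi : i ∈ A <;> by_cases hj : i ∈ S <;>
      simp [R, hi, hj, topRanking_iff, topKey] <;> grind
  · left
    have hx : x ∈ f R := by tauto
    refine Decisive.spread hX hf hW hG hxz (.of_profile hG hxz R ?_ hx hz) hxy
    intro i
    by_cases hi : i ∈ A <;> by_cases hj : i ∈ S <;>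
      simp [R, hi, hj, topRanking_iff, topKey] <;> grind

theorem not_decisive_empty {X : Type*} [Fintype X] {n : ℕ} (hX : 3 ≤ Fintype.card X)
    {f : Profile X n → Set X} (hf : ∀ R, (f R).Nonempty) (hW : WDC f)
    {x y : X} (hxy : x ≠ y) : ¬ Decisive f ∅ x y := by
  intro h
  obtain ⟨z, hxz, hyz⟩ := exists_third hX x y
  -- `y` is on top in every state, yet an empty decisive set would reject it.
  let R : Profile X n := fun _ => topRanking y x z
  have hy : y ∉ f R := h R fun i => by simp [R, topRanking_iff, topKey]; grind
  have hx : x ∉ f R := hW y x (Ne.symm hxy) R fun i => by simp [R, topRanking_iff, topKey]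
  have hz : z ∉ f R := hW y z hyz R fun i => by simp [R, topRanking_iff, topKey]
  have := chosen_of_top hf hW x y z R fun i w h1 h2 h3 => by
    simp [R, topRanking_iff, topKey]; grind
  tauto

theorem ssdr_of_wdc_giia {X : Type*} [Fintype X] {n : ℕ} (hX : 3 ≤ Fintype.card X)
    {f : Profile X n → Set X} (hf : ∀ R, (f R).Nonempty) (hW : WDC f) (hG : GIIA f) :
    SSDR f := by
  have : Nontrivial X := Fintype.one_lt_card_iff_nontrivial.mp (by omega)
  obtain ⟨x, y, hxy⟩ := exists_pair_ne X
  have huniv : Decisive f Set.univ x y := fun R hR =>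
    hW x y hxy R fun i => (hR i).mpr (Set.mem_univ i)
  obtain ⟨S, -, hS⟩ := (Set.toFinite {S : Set (Fin n) | Decisive f S x y}).exists_le_minimal huniv
  obtain ⟨i, hi⟩ : S.Nonempty := by
    rw [Set.nonempty_iff_ne_empty]
    rintro rfl
    exact not_decisive_empty hX hf hW hxy hS.prop
  have hsing : Decisive f {i} x y := by
    rcases hS.prop.split hX hf hW hG (Set.singleton_subset_iff.mpr hi) hxy with h | h
    · exact h
    · exact absurd rfl (hS.le_of_le h Set.sdiff_subset hi).2
  refine ⟨i, fun a b hab R hR => ?_⟩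
  exact ((hsing.spread hX hf hW hG hxy hab).mono hX hf hW hG (T := {j | (R j).1 a b})
    (Set.singleton_subset_iff.mpr hR) hab) R fun j => Iff.rfl

/-- A choice function on `L^{N(n)}` satisfies WDC and GIIA
iff it is a state-salient decision rule. -/
theorem stmt_0 {X : Type*} [Fintype X] {n : ℕ} (hX : 3 ≤ Fintype.card X) (hn : 2 ≤ n)
    (f : Profile X n → Set X) (hf : ∀ R, (f R).Nonempty) :
    (WDC f ∧ GIIA f) ↔ SSDR f := by
  constructor
  · rintro ⟨hW, hG⟩
    exact ssdr_of_wdc_giia hX hf hW hG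
  · rintro ⟨i, hi⟩
    refine ⟨fun x y hxy R h => hi x y hxy R (h i), fun R R' x y hxy h hx _ => ?_⟩
    -- A chosen `x` cannot be beaten in state `i`, so it beats `y` there in both profiles.
    rcases (R i).2.total x y with h1 | h1
    · exact hi x y hxy R' ((h i).mp h1)
    · exact absurd hx (hi y x (Ne.symm hxy) R h1)
end

section
/- Let X be a finite set of alternatives with |X| = m ≥ 3 and let N(n) = {1,…,n} with n ≥ 2 be the set of states of nature. If a choice function f on L^{N(n)} is Resolute for Pairs and satisfies Weak Monotonicity, then f satisfies Global Independence of Irrelevant Alternatives (GIIA). -/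
/-- The ranking obtained from `r` by moving `x` and `y` to the top, keeping the order of `r`
between `x` and `y` and among the remaining alternatives. -/
def liftPair {X : Type*} (x y : X) (r : Ranking X) : Ranking X :=
  ⟨fun a b => ((a = x ∨ a = y) ∧ ¬ (b = x ∨ b = y)) ∨
      (((a = x ∨ a = y) ↔ (b = x ∨ b = y)) ∧ r.1 a b), by
    have hr := r.2
    have hrefl : ∀ a, r.1 a a := hr.refl
    have htrans : ∀ a b c, r.1 a b → r.1 b c → r.1 a c := hr.trans
    have hanti : ∀ a b, r.1 a b → r.1 b a → a = b := hr.antisymm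
    have htot : ∀ a b, r.1 a b ∨ r.1 b a := hr.total
    exact
      { refl := fun a => Or.inr ⟨Iff.rfl, hrefl a⟩
        trans := fun a b c hab hbc => by
          have := htrans a b c
          tauto
        antisymm := fun a b hab hba => by
          have := hanti a b
          tauto
        total := fun a b => by
          have := htot a b
          tauto }⟩

lemma liftPair_of_mem_of_notMem {X : Type*} {x y a b : X} (r : Ranking X)
    (ha : a = x ∨ a = y) (hb : ¬ (b = x ∨ b = y)) : (liftPair x y r).1 a b :=
  Or.inl ⟨ha, hb⟩

lemma liftPair_of_mem_of_mem {X : Type*} {x y a b : X} (r : Ranking X)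
    (ha : a = x ∨ a = y) (hb : b = x ∨ b = y) (h : r.1 a b) : (liftPair x y r).1 a b :=
  Or.inr ⟨iff_of_true ha hb, h⟩

/-- Only `x` and `y` can be weakly above a member of the lifted pair, so its rank is at most two. -/
lemma rk_liftPair {X : Type*} {x y a : X} (r : Ranking X) (ha : a = x ∨ a = y) :
    rk (liftPair x y r) a = 1 ∨ rk (liftPair x y r) a = 2 := by
  have hsub : {z | (liftPair x y r).1 z a} ⊆ {x, y} := by
    rintro z (⟨hz, -⟩ | ⟨hz, -⟩)
    · exact hz
    · exact hz.mpr ha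
  have hfin : ({x, y} : Set X).Finite := Set.toFinite _
  have hle : rk (liftPair x y r) a ≤ 2 :=
    (Set.ncard_le_ncard hsub hfin).trans
      ((Set.ncard_insert_le x {y}).trans (by rw [Set.ncard_singleton]))
  have hpos : 0 < rk (liftPair x y r) a :=
    (Set.ncard_pos (hfin.subset hsub)).mpr ⟨a, (liftPair x y r).2.refl a⟩
  omega

/-- Resolute for Pairs together with Weak Monotonicity implies GIIA. -/
theorem stmt_4 {X : Type*} [Fintype X] {n : ℕ} (hX : 3 ≤ Fintype.card X) (hn : 2 ≤ n)
    (f : Profile X n → Set X) (hf : ∀ R, (f R).Nonempty)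
    (hRP : ResoluteForPairs f) (hWM : WeakMono f) : GIIA f := by
  intro R R' x y hxy hagree hx _ hy
  have hxT : x ∈ f (fun i => liftPair x y (R i)) := by
    refine hWM R _ x hx fun z hz i hi => ?_
    by_cases hzy : z = x ∨ z = y
    · exact liftPair_of_mem_of_mem _ (Or.inl rfl) hzy hi
    · exact liftPair_of_mem_of_notMem _ (Or.inl rfl) hzy
  have hyT : y ∈ f (fun i => liftPair x y (R i)) := by
    refine hWM R' _ y hy fun z hz i hi => ?_
    by_cases hzx : z = x
    · subst hzx
      refine liftPair_of_mem_of_mem _ (Or.inr rfl) (Or.inl rfl) ?_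
      -- Agreement is stated for `x` above `y`; totality and antisymmetry give the reverse order.
      refine ((R i).2.total y z).resolve_right fun h => hxy ?_
      exact (R' i).2.antisymm z y ((hagree i).mp h) hi
    · exact liftPair_of_mem_of_notMem _ (Or.inr rfl) (not_or.mpr ⟨hzx, hz⟩)
  rcases hRP _ x y hxy fun i =>
      ⟨rk_liftPair (R i) (Or.inl rfl), rk_liftPair (R i) (Or.inr rfl)⟩ with h | h
  · rw [h] at hyT
    exact hxy hyT.symm
  · rw [h] at hxT
    exact hxy hxT
end

section
/- Let X be a finite set of alternatives with |X| = m ≥ 3 and let N(n) = {1,…,n} with n ≥ 2 be the set of states of nature. A choice function f on L^{N(n)} satisfies the Weak Dominance Criterion (WDC), satisfies Weak Monotonicity, and is Resolute for Pairs, if and only if f is a state-salient decision rule (S-SDR). -/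
section Rankings

variable {X : Type*}

lemma ranking_refl (r : Ranking X) (a : X) : r.1 a a := r.2.refl a

lemma ranking_trans (r : Ranking X) {a b c : X} : r.1 a b → r.1 b c → r.1 a c := r.2.trans a b c

lemma ranking_antisymm (r : Ranking X) {a b : X} : r.1 a b → r.1 b a → a = b := r.2.antisymm a b

lemma ranking_total (r : Ranking X) (a b : X) : r.1 a b ∨ r.1 b a := r.2.total a b

/-- The ranking obtained from `r` by moving `x` to the top, all else being unchanged. -/
def toTop (r : Ranking X) (x : X) : Ranking X :=
  ⟨fun a b => a = x ∨ (b ≠ x ∧ r.1 a b),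
    { refl := fun a => by
        by_cases h : a = x
        · exact Or.inl h
        · exact Or.inr ⟨h, ranking_refl r a⟩
      trans := fun a b c => by
        rintro (h | ⟨h, h'⟩) (k | ⟨k, k'⟩)
        · exact Or.inl h
        · exact Or.inl h
        · exact absurd k h
        · exact Or.inr ⟨k, ranking_trans r h' k'⟩
      antisymm := fun a b => by
        rintro (h | ⟨h, h'⟩) (k | ⟨k, k'⟩)
        · exact h.trans k.symm
        · exact absurd h k
        · exact absurd k h
        · exact ranking_antisymm r h' k'
      total := fun a b => by
        by_cases ha : a = x
        · exact Or.inl (Or.inl ha)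
        · by_cases hb : b = x
          · exact Or.inr (Or.inl hb)
          · exact (ranking_total r a b).imp (fun h => Or.inr ⟨hb, h⟩) (fun h => Or.inr ⟨ha, h⟩) }⟩

lemma toTop_iff (r : Ranking X) (x a b : X) :
    (toTop r x).1 a b ↔ a = x ∨ (b ≠ x ∧ r.1 a b) := Iff.rfl

lemma exists_ranking (X : Type*) [Fintype X] : Nonempty (Ranking X) := by
  let e := Fintype.equivFin X
  exact ⟨⟨fun a b => e a ≤ e b,
    { refl := fun a => le_refl _
      trans := fun a b c => le_trans
      antisymm := fun a b h k => e.injective (le_antisymm h k)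
      total := fun a b => le_total _ _ }⟩⟩

lemma rk_toTop_toTop (r : Ranking X) {x y : X} (hxy : x ≠ y) :
    rk (toTop (toTop r y) x) x = 1 ∧ rk (toTop (toTop r y) x) y = 2 := by
  constructor
  · have : {w | (toTop (toTop r y) x).1 w x} = {x} := by
      ext w; simp [toTop_iff]
    rw [rk, this, Set.ncard_singleton]
  · have : {w | (toTop (toTop r y) x).1 w y} = {x, y} := by
      ext w; simp [toTop_iff, hxy.symm]
    rw [rk, this, Set.ncard_pair hxy]

end Rankings

section Blocking

variable {X : Type*} {n : ℕ} {f : Profile X n → Set X}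

/-- The coalition `S` blocks `y` via `x`: the alternative `y` is never chosen at a profile in which
every state of `S` ranks `x` above `y`. -/
def Blocks (f : Profile X n → Set X) (x y : X) (S : Set (Fin n)) : Prop :=
  ∀ R : Profile X n, (∀ i ∈ S, (R i).1 x y) → y ∉ f R

open Classical in
/-- A profile in which `x` and `y` are the two best alternatives in every state, `x` being above `y`
exactly in the states of `S`. The remaining alternatives are ordered as in `r`. -/
noncomputable def pairProfile (r : Ranking X) (x y : X) (S : Set (Fin n)) : Profile X n :=
  fun i => if i ∈ S then toTop (toTop r y) x else toTop (toTop r x) y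

lemma pairProfile_compl (r : Ranking X) (x y : X) (S : Set (Fin n)) :
    pairProfile r y x Sᶜ = pairProfile r x y S := by
  funext i
  by_cases h : i ∈ S <;> simp [pairProfile, h]

lemma resolute_pairProfile (hres : ResoluteForPairs f) (r : Ranking X) {x y : X} (hxy : x ≠ y)
    (S : Set (Fin n)) : f (pairProfile r x y S) = {x} ∨ f (pairProfile r x y S) = {y} := by
  refine hres _ x y hxy fun i => ?_
  have h1 := rk_toTop_toTop r hxy
  have h2 := rk_toTop_toTop r hxy.symm
  by_cases h : i ∈ S <;> simp [pairProfile, h, h1, h2]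

/-- If `x` is chosen at one profile topped by `x` and `y`, then the coalition preferring `x` there
blocks `y`: otherwise, raising `x` and `y` to the top at a profile where `y` is chosen would leave
both of them chosen. -/
lemma blocks_of_mem (hmono : WeakMono f) (hres : ResoluteForPairs f) (r : Ranking X) {x y : X}
    (hxy : x ≠ y) (S : Set (Fin n)) (hx : x ∈ f (pairProfile r x y S)) : Blocks f x y S := by
  intro R hR hy
  let T : Set (Fin n) := {i | (R i).1 x y}
  have hyT : y ∈ f (pairProfile r x y T) := by
    refine hmono R _ y hy fun w hw i hi => ?_
    by_cases h : i ∈ T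
    · have hwx : w ≠ x := by
        rintro rfl
        exact hxy (ranking_antisymm (R i) h hi)
      simp [pairProfile, h, toTop_iff, hwx]
    · simp [pairProfile, h, toTop_iff]
  have hxT : x ∈ f (pairProfile r x y T) := by
    refine hmono _ _ x hx fun w hw i hi => ?_
    by_cases h : i ∈ T
    · simp [pairProfile, h, toTop_iff]
    · have hS : i ∉ S := fun hS => h (hR i hS)
      simpa [pairProfile, h, hS] using hi
  rcases resolute_pairProfile hres r hxy T with h | h
  · rw [h] at hyT
    exact hxy hyT.symm
  · rw [h] at hxT
    exact hxy hxT

lemma blocks_or_blocks_compl (hmono : WeakMono f) (hres : ResoluteForPairs f) (r : Ranking X)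
    {x y : X} (hxy : x ≠ y) (S : Set (Fin n)) : Blocks f x y S ∨ Blocks f y x Sᶜ := by
  rcases resolute_pairProfile hres r hxy S with h | h
  · exact Or.inl (blocks_of_mem hmono hres r hxy S (by simp [h]))
  · exact Or.inr (blocks_of_mem hmono hres r hxy.symm Sᶜ (by simp [pairProfile_compl, h]))

lemma Blocks.mono {x y : X} {S T : Set (Fin n)} (h : Blocks f x y S) (hST : S ⊆ T) :
    Blocks f x y T :=
  fun R hR => h R fun i hi => hR i (hST hi)

lemma not_blocks_empty (hf : ∀ R, (f R).Nonempty) (hwdc : WDC f) (r : Ranking X) (x y : X) :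
    ¬ Blocks f x y (∅ : Set (Fin n)) := by
  intro h
  -- If `y` is unanimously best, dominance excludes everything else.
  let R : Profile X n := fun _ => toTop r y
  obtain ⟨w, hw⟩ := hf R
  have hwy : y ≠ w := by
    rintro rfl
    exact h R (by simp) hw
  exact hwdc y w hwy R (fun _ => Or.inl rfl) hw

lemma Blocks.inter (hf : ∀ R, (f R).Nonempty) (hwdc : WDC f) (hmono : WeakMono f)
    (hres : ResoluteForPairs f) (r : Ranking X) {x y z : X} (hxy : x ≠ y) (hyz : y ≠ z)
    (hxz : x ≠ z) {S T : Set (Fin n)} (hS : Blocks f x y S) (hT : Blocks f y z T) :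
    Blocks f x z (S ∩ T) := by
  classical
  refine (blocks_or_blocks_compl hmono hres r hxz (S ∩ T)).resolve_right fun hC => ?_
  -- The three cyclic orders of `x`, `y`, `z` realise `x > y` on `S`, `y > z` on `T` and `z > x`
  -- off `S ∩ T`, with all other alternatives below.
  let R : Profile X n := fun i =>
    if i ∈ T then
      if i ∈ S then toTop (toTop (toTop r z) y) x else toTop (toTop (toTop r x) z) y
    else toTop (toTop (toTop r y) x) z
  have hy : y ∉ f R := hS R fun i hi => by
    by_cases h : i ∈ T <;> simp [R, h, hi, toTop_iff, hyz, hxy, hxz]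
  have hz : z ∉ f R := hT R fun i hi => by
    by_cases h : i ∈ S <;> simp [R, h, hi, toTop_iff, hyz, hyz.symm, hxz.symm]
  have hx : x ∉ f R := hC R fun i hi => by
    by_cases h : i ∈ T
    · have hS' : i ∉ S := fun hS' => hi ⟨hS', h⟩
      simp [R, h, hS', toTop_iff, hyz.symm, hxy, hxz, hxz.symm]
    · simp [R, h, toTop_iff]
  obtain ⟨w, hw⟩ := hf R
  have hwx : w ≠ x := by rintro rfl; exact hx hw
  have hwy : w ≠ y := by rintro rfl; exact hy hw
  have hwz : w ≠ z := by rintro rfl; exact hz hw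
  refine hwdc x w hwx.symm R (fun i => ?_) hw
  by_cases h : i ∈ T <;> by_cases h' : i ∈ S <;> simp [R, h, h', toTop_iff, hwx, hwy, hwz]

lemma blocks_univ (hwdc : WDC f) {x y : X} (hxy : x ≠ y) : Blocks f x y Set.univ :=
  fun R hR => hwdc x y hxy R fun i => hR i trivial

/-- With at least three alternatives, whether a coalition blocks does not depend on the pair. -/
lemma Blocks.neutral [Fintype X] (hX : 3 ≤ Fintype.card X) (hf : ∀ R, (f R).Nonempty)
    (hwdc : WDC f) (hmono : WeakMono f) (hres : ResoluteForPairs f) (r : Ranking X) {x y : X}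
    (hxy : x ≠ y) {S : Set (Fin n)} (hS : Blocks f x y S) {u v : X} (huv : u ≠ v) :
    Blocks f u v S := by
  classical
  have right : ∀ {a b c : X}, a ≠ b → a ≠ c → Blocks f a b S → Blocks f a c S := by
    intro a b c hab hac h
    by_cases hbc : b = c
    · exact hbc ▸ h
    · simpa using h.inter hf hwdc hmono hres r hab hbc hac (blocks_univ hwdc hbc)
  have left : ∀ {a b c : X}, a ≠ b → c ≠ b → Blocks f a b S → Blocks f c b S := by
    intro a b c hab hcb h
    by_cases hca : c = a
    · exact hca ▸ h
    · simpa using (blocks_univ hwdc hca).inter hf hwdc hmono hres r hca hab hcb h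
  -- A third alternative `w`, different from `x` and `u`, serves as a common second entry.
  obtain ⟨w, hw⟩ : ∃ w, w ∉ ({x, u} : Finset X) := by
    by_contra! h
    have h1 : Fintype.card X ≤ ({x, u} : Finset X).card :=
      Finset.card_le_card fun a _ => h a
    have h2 : ({x, u} : Finset X).card ≤ 2 := Finset.card_le_two
    omega
  simp only [Finset.mem_insert, Finset.mem_singleton, not_or] at hw
  have hxw : x ≠ w := Ne.symm hw.1
  have huw : u ≠ w := Ne.symm hw.2
  exact right huw huv (left hxw huw (right hxy hxw hS))

/-- The blocking coalitions form an ultrafilter on the finite set of states, whose generator is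
salient. -/
lemma ssdr_of_axioms [Fintype X] (hX : 3 ≤ Fintype.card X) (hf : ∀ R, (f R).Nonempty)
    (hwdc : WDC f) (hmono : WeakMono f) (hres : ResoluteForPairs f) : SSDR f := by
  classical
  obtain ⟨r⟩ := exists_ranking X
  obtain ⟨x, y, z, hxy, hxz, hyz⟩ := Fintype.two_lt_card_iff.mp hX
  have neutral : ∀ {S : Set (Fin n)} {a b u v : X}, a ≠ b → u ≠ v → Blocks f a b S →
      Blocks f u v S :=
    fun hab huv h => h.neutral hX hf hwdc hmono hres r hab huv
  have inter : ∀ {S T : Set (Fin n)}, Blocks f x y S → Blocks f x y T → Blocks f x y (S ∩ T) :=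
    fun hS hT => neutral hxz hxy
      (hS.inter hf hwdc hmono hres r hxy hyz hxz (neutral hxy hyz hT))
  let F : Filter (Fin n) :=
    { sets := {S | Blocks f x y S}
      univ_sets := blocks_univ hwdc hxy
      sets_of_superset := fun h hST => Blocks.mono h hST
      inter_sets := inter }
  have hF : ∀ S, S ∈ F ↔ Blocks f x y S := fun S => Iff.rfl
  let U : Ultrafilter (Fin n) := Ultrafilter.ofComplNotMemIff F fun S => by
    rw [hF, hF]
    constructor
    · intro h
      exact (blocks_or_blocks_compl hmono hres r hxy S).resolve_right
        fun h' => h (neutral hxy.symm hxy h')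
    · intro h h'
      have := inter h h'
      rw [Set.inter_compl_self] at this
      exact not_blocks_empty hf hwdc r x y this
  obtain ⟨i, hi⟩ := Ultrafilter.eq_pure_of_finite U
  have hiB : Blocks f x y {i} := by
    have : ({i} : Set (Fin n)) ∈ U := by rw [hi]; exact Set.mem_singleton i
    exact this
  refine ⟨i, fun a b hab R hR => neutral hxy hab hiB R fun j hj => ?_⟩
  rw [Set.mem_singleton_iff.mp hj]
  exact hR

end Blocking

/-- WDC, Weak Monotonicity and Resolute for Pairs characterize S-SDRs. -/
theorem stmt_5 {X : Type*} [Fintype X] {n : ℕ} (hX : 3 ≤ Fintype.card X) (hn : 2 ≤ n)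
    (f : Profile X n → Set X) (hf : ∀ R, (f R).Nonempty) :
    (WDC f ∧ WeakMono f ∧ ResoluteForPairs f) ↔ SSDR f := by
  constructor
  · rintro ⟨hwdc, hmono, hres⟩
    exact ssdr_of_axioms hX hf hwdc hmono hres
  · rintro ⟨i, hi⟩
    -- A chosen alternative is the best one of state `i`, and conversely.
    have best : ∀ R x, x ∈ f R ↔ ∀ y, (R i).1 x y := by
      intro R x
      constructor
      · intro hx y
        by_contra h
        have hyx := (ranking_total (R i) x y).resolve_left h
        have hne : y ≠ x := by rintro rfl; exact h hyx
        exact hi y x hne R hyx hx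
      · intro hx
        obtain ⟨w, hw⟩ := hf R
        by_cases hxw : x = w
        · exact hxw ▸ hw
        · exact absurd hw (hi x w hxw R (hx w))
    refine ⟨fun x y hxy R hR => hi x y hxy R (hR i), fun R R' x hx h => ?_,
      fun R x y hxy hr => ?_⟩
    · rw [best] at hx ⊢
      intro y
      by_cases hyx : y = x
      · exact hyx ▸ ranking_refl _ _
      · exact h y hyx (hx y)
    · have rank_lt : ∀ a b, a ≠ b → (R i).1 a b → rk (R i) a < rk (R i) b := by
        intro a b hab h
        refine Set.ncard_lt_ncard ⟨fun c hc => ranking_trans _ hc h, fun hsub => ?_⟩ (Set.toFinite _)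
        exact hab (ranking_antisymm _ h (hsub (ranking_refl _ b)))
      have rank_pos : ∀ a, 0 < rk (R i) a := fun a =>
        (Set.ncard_pos (Set.toFinite _)).mpr ⟨a, ranking_refl _ a⟩
      obtain ⟨w, hw⟩ := hf R
      have hwb := (best R w).mp hw
      have huniq : f R = {w} := by
        ext v
        refine ⟨fun hv => ?_, fun hv => hv ▸ hw⟩
        exact ranking_antisymm (R i) ((best R v).mp hv w) (hwb v)
      have hwxy : w = x ∨ w = y := by
        by_contra! hne
        have h1 := rank_lt w x hne.1 (hwb x)
        have h2 := rank_lt w y hne.2 (hwb y)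
        have h3 := rank_pos w
        have h4 := hr i
        rcases ranking_total (R i) x y with h | h
        · have := rank_lt x y hxy h
          omega
        · have := rank_lt y x hxy.symm h
          omega
      rcases hwxy with rfl | rfl
      · exact Or.inl huniq
      · exact Or.inr huniq
end

section
/- Let X be a finite set of alternatives with |X| = m ≥ 3 and let N(n) = {1,…,n} with n ≥ 2 be the set of states of nature. For a choice function f on L^{N(n)} (the set of all preference profiles), f satisfies Weak Monotonicity if and only if f satisfies Down Monotonicity. -/
/-- The ranking obtained from `r` by exchanging `a` and `b`, where `a` stands immediately
above `b`. -/
def swapAdj {X : Type*} (r : Ranking X) (a b : X) (hab : r.1 a b) (hne : a ≠ b)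
    (hadj : ∀ c, r.1 a c → r.1 c b → c = a ∨ c = b) : Ranking X :=
  ⟨fun u v => (r.1 u v ∧ ¬(u = a ∧ v = b)) ∨ (u = b ∧ v = a), by
    have hr := r.2
    have hrefl : ∀ u, r.1 u u := fun u => hr.refl u
    have htrans : ∀ u v w, r.1 u v → r.1 v w → r.1 u w := fun u v w => hr.trans u v w
    have hanti : ∀ u v, r.1 u v → r.1 v u → u = v := fun u v => hr.antisymm u v
    have htot : ∀ u v, r.1 u v ∨ r.1 v u := fun u v => hr.total u v
    exact
      { refl := by grind
        trans := by grind
        antisymm := by grind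
        total := by grind }⟩

/-- Exchanging adjacent alternatives lowers the upper one by exactly one rank. -/
lemma rk_swapAdj {X : Type*} [Finite X] (r : Ranking X) (a b : X) (hab : r.1 a b) (hne : a ≠ b)
    (hadj : ∀ c, r.1 a c → r.1 c b → c = a ∨ c = b) :
    rk (swapAdj r a b hab hne hadj) a = rk r a + 1 := by
  have hb : b ∉ {u | r.1 u a} := fun h => hne (r.2.antisymm _ _ hab h)
  have hset : {u | (swapAdj r a b hab hne hadj).1 u a} = insert b {u | r.1 u a} := by
    ext u
    simp only [swapAdj, Set.mem_setOf_eq, Set.mem_insert_iff]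
    grind
  rw [rk, hset, Set.ncard_insert_of_notMem hb, rk]

/-- A pair on which two rankings disagree and that is closest in the first one is adjacent there:
an alternative strictly in between would form a closer such pair with one of the two ends. -/
lemma exists_adjacent_inversion {X : Type*} [Finite X] (r r' : Ranking X)
    (h : ∃ a b, r.1 a b ∧ ¬ r'.1 a b) :
    ∃ a b, r.1 a b ∧ ¬ r'.1 a b ∧ ∀ c, r.1 a c → r.1 c b → c = a ∨ c = b := by
  obtain ⟨a₀, b₀, h₀⟩ := h
  obtain ⟨⟨a, b⟩, ⟨hab, hab'⟩, hmin⟩ :=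
    Set.exists_min_image {p : X × X | r.1 p.1 p.2 ∧ ¬ r'.1 p.1 p.2}
      (fun p => {c | r.1 p.1 c ∧ r.1 c p.2}.ncard) (Set.toFinite _) ⟨(a₀, b₀), h₀⟩
  refine ⟨a, b, hab, hab', fun c hac hcb => ?_⟩
  by_contra! hc
  by_cases hac' : r'.1 a c
  · have hcb' : ¬ r'.1 c b := fun h => hab' (r'.2.trans _ _ _ hac' h)
    refine absurd (hmin (c, b) ⟨hcb, hcb'⟩) (not_le.mpr (Set.ncard_lt_ncard ?_))
    refine ⟨fun d hd => ⟨r.2.trans _ _ _ hac hd.1, hd.2⟩, fun hsub => ?_⟩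
    have had : r.1 c a := (hsub (show a ∈ _ from ⟨r.2.refl a, hab⟩)).1
    exact hc.1 (r.2.antisymm _ _ had hac)
  · refine absurd (hmin (a, c) ⟨hac, hac'⟩) (not_le.mpr (Set.ncard_lt_ncard ?_))
    refine ⟨fun d hd => ⟨hd.1, r.2.trans _ _ _ hd.2 hcb⟩, fun hsub => ?_⟩
    have hbd : r.1 b c := (hsub (show b ∈ _ from ⟨hab, r.2.refl b⟩)).2
    exact hc.2 (r.2.antisymm _ _ hcb hbd)

/-- Lowering `y` by one rank, the order of the others being fixed, keeps everything above `y` that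
was above it. -/
lemma above_of_lowered {X : Type*} [Finite X] (r r' : Ranking X) (x y : X) (hyx : y ≠ x)
    (hagree : ∀ a b : X, a ≠ y → b ≠ y → (r.1 a b ↔ r'.1 a b))
    (hrk : rk r' y = rk r y + 1) (hxy : r.1 x y) : r'.1 x y := by
  by_contra hn
  have hyx' : r'.1 y x := (r'.2.total x y).resolve_left hn
  -- If `y` were above `x` in `r'`, nothing new could be above `y`, so its rank could not grow.
  have hsub : {u | r'.1 u y} ⊆ {u | r.1 u y} := by
    intro u hu
    by_cases huy : u = y
    · exact huy ▸ r.2.refl u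
    · exact r.2.trans _ _ _ ((hagree u x huy hyx.symm).2 (r'.2.trans _ _ _ hu hyx')) hxy
  have hle : rk r' y ≤ rk r y := Set.ncard_le_ncard hsub
  omega

/-- The disagreements of `R` with `R'`: triples `(i, a, b)` with `a` above `b` in `R i` but not in
`R' i`. -/
def inversions {X : Type*} {n : ℕ} (R R' : Profile X n) : Set (Fin n × X × X) :=
  {t | (R t.1).1 t.2.1 t.2.2 ∧ ¬ (R' t.1).1 t.2.1 t.2.2}

lemma eq_of_inversions_empty {X : Type*} {n : ℕ} (R R' : Profile X n)
    (h : ¬ ∃ i a b, (R i).1 a b ∧ ¬ (R' i).1 a b) : R = R' := by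
  push Not at h
  funext i
  apply Subtype.ext
  funext a b
  refine propext ⟨h i a b, fun hab' => ?_⟩
  rcases (R i).2.total a b with hab | hba
  · exact hab
  · obtain rfl := (R' i).2.antisymm _ _ hab' (h i b a hba)
    exact (R i).2.refl a

/-- Down Monotonicity implies Weak Monotonicity, by induction on the number of disagreements
between the two profiles. -/
lemma DownMono.mem_of_inversions {X : Type*} [Finite X] {n : ℕ} {f : Profile X n → Set X}
    (hD : DownMono f) (R' : Profile X n) (x : X) (k : ℕ) :
    ∀ R : Profile X n, (inversions R R').ncard = k → x ∈ f R →
      (∀ i y, (R i).1 x y → (R' i).1 x y) → x ∈ f R' := by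
  induction k using Nat.strong_induction_on with
  | _ k ih =>
    intro R hk hx hmono
    by_cases hinv : ∃ i a b, (R i).1 a b ∧ ¬ (R' i).1 a b
    · obtain ⟨i, hi⟩ := hinv
      obtain ⟨a, b, hab, hab', hadj⟩ := exists_adjacent_inversion (R i) (R' i) hi
      have hne : a ≠ b := fun h => hab' (h ▸ (R' i).2.refl a)
      have hax : a ≠ x := fun h => hab' (h ▸ hmono i b (h ▸ hab))
      have hba' : (R' i).1 b a := ((R' i).2.total a b).resolve_left hab'
      set r₁ := swapAdj (R i) a b hab hne hadj with hr₁
      have hr₁_iff : ∀ u v, r₁.1 u v ↔ ((R i).1 u v ∧ ¬(u = a ∧ v = b)) ∨ (u = b ∧ v = a) :=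
        fun _ _ => Iff.rfl
      have hlt : (inversions (Function.update R i r₁) R').ncard < k := by
        rw [← hk]
        refine Set.ncard_lt_ncard ⟨?_, fun hsub => ?_⟩
        · rintro ⟨j, u, v⟩ ⟨h1, h2⟩
          refine ⟨?_, h2⟩
          by_cases hj : j = i
          · subst hj
            simp only [Function.update_self, hr₁_iff] at h1 h2 ⊢
            grind
          · simpa [Function.update_of_ne hj] using h1
        · have hmem := (hsub (show (i, a, b) ∈ inversions R R' from ⟨hab, hab'⟩)).1
          simp only [Function.update_self, hr₁_iff] at hmem
          grind
      refine ih _ hlt _ rfl ?_ ?_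
      · refine hD R _ i x hx a hax (fun j hj => (Function.update_of_ne hj _ _).symm) ?_ ?_
        · intro u v hu hv
          simp only [Function.update_self, hr₁_iff]
          grind
        · simpa using rk_swapAdj (R i) a b hab hne hadj
      · intro j y hy
        by_cases hj : j = i
        · subst hj
          simp only [Function.update_self, hr₁_iff] at hy
          rcases hy with hy | ⟨rfl, rfl⟩
          · exact hmono j y hy.1
          · exact hba'
        · exact hmono j y (by simpa [Function.update_of_ne hj] using hy)
    · exact eq_of_inversions_empty R R' hinv ▸ hx

/-- on the full domain, Weak Monotonicity is equivalent to Down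
Monotonicity. -/
theorem stmt_6 {X : Type*} [Fintype X] {n : ℕ} (hX : 3 ≤ Fintype.card X) (hn : 2 ≤ n)
    (f : Profile X n → Set X) (hf : ∀ R, (f R).Nonempty) :
    WeakMono f ↔ DownMono f := by
  constructor
  · intro hW R R' i x hx y hyx hother hagree hrk
    refine hW R R' x hx fun z hzx j hj => ?_
    simp only [Set.mem_setOf_eq] at hj ⊢
    by_cases hji : j = i
    · subst hji
      by_cases hzy : z = y
      · subst hzy
        exact above_of_lowered _ _ x z hyx hagree hrk hj
      · exact (hagree x z hyx.symm hzy).1 hj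
    · exact hother j hji ▸ hj
  · intro hD R R' x hx hsub
    refine hD.mem_of_inversions R' x _ R rfl hx fun i y hy => ?_
    by_cases hyx : y = x
    · exact hyx ▸ (R' i).2.refl y
    · exact hsub y hyx hy
end

section
/- Let X be a finite set of alternatives with |X| = m ≥ 3 and let N(n) = {1,…,n} with n ≥ 2 be the set of states of nature. A choice function f on the domain D^{N(n)}_StrictCondorcet of all preference profiles possessing a strict Condorcet-winner satisfies Global Independence of Irrelevant Alternatives (GIIA) and Most Probable at the Top (MPT) if and only if f is the Strict-Condorcet rule S-C, i.e., f(R) = {the strict Condorcet-winner at R} for every R in the domain. -/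
/-- The ranking obtained from `r` by moving the alternatives satisfying `p` above all others,
keeping the order of `r` inside `p` and inside its complement. -/
def Ranking.raise {X : Type*} (p : X → Prop) (r : Ranking X) : Ranking X :=
  ⟨fun a b => (p a ∧ ¬ p b) ∨ ((p a ↔ p b) ∧ r.1 a b), by
    have := r.2
    have hr : ∀ a, r.1 a a := refl_of r.1
    have ht : ∀ a b c, r.1 a b → r.1 b c → r.1 a c := fun _ _ _ => trans_of r.1
    have ha : ∀ a b, r.1 a b → r.1 b a → a = b := fun _ _ => antisymm_of r.1
    have hc : ∀ a b, r.1 a b ∨ r.1 b a := total_of r.1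
    exact
      { refl := fun a => Or.inr ⟨Iff.rfl, hr a⟩
        trans := fun a b c => by have := ht a b c; tauto
        antisymm := fun a b => by have := ha a b; tauto
        total := fun a b => by have := hc a b; tauto }⟩

theorem Ranking.flip_iff {X : Type*} (r : Ranking X) {x y : X} (h : x ≠ y) :
    r.1 y x ↔ ¬ r.1 x y := by
  have := r.2
  exact ⟨fun h1 h2 => h (antisymm_of r.1 h2 h1), (total_of r.1 x y).resolve_left⟩

/-- Majority comparisons of `x` and `y` only depend on the restriction to `{x, y}`. -/
theorem majority_congr {X : Type*} {n : ℕ} {R R' : Profile X n} {x y : X} (hxy : x ≠ y)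
    (h : ∀ i, (R i).1 x y ↔ (R' i).1 x y)
    (hlt : Set.ncard {i : Fin n | (R i).1 y x} < Set.ncard {i : Fin n | (R i).1 x y}) :
    Set.ncard {i : Fin n | (R' i).1 y x} < Set.ncard {i : Fin n | (R' i).1 x y} := by
  simpa only [Ranking.flip_iff _ hxy, h] using hlt

theorem scWinner_of_top_pair {X : Type*} {n : ℕ} (hn : 2 ≤ n) {R : Profile X n} {x y : X}
    (htop : ∀ i, ∀ w : X, w ≠ x → w ≠ y → (R i).1 x w ∧ (R i).1 y w)
    (hlt : Set.ncard {i : Fin n | (R i).1 y x} < Set.ncard {i : Fin n | (R i).1 x y}) :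
    SCWinner R x := by
  intro w hwx
  by_cases hwy : w = y
  · subst hwy; exact hlt
  · have h1 : ∀ i, (R i).1 x w := fun i => (htop i w hwx hwy).1
    simp only [Ranking.flip_iff _ hwx.symm, h1, not_true_eq_false, Set.ofPred_false,
      Set.ofPred_true, Set.ncard_empty, Set.ncard_univ, Nat.card_eq_fintype_card, Fintype.card_fin]
    omega

/-- on the domain of profiles possessing a strict Condorcet-winner,
a choice function satisfies GIIA and MPT iff it is the Strict-Condorcet rule. -/
theorem stmt_8 {X : Type*} [Fintype X] {n : ℕ} (hX : 3 ≤ Fintype.card X) (hn : 2 ≤ n)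
    (f : Profile X n → Set X)
    (hf : ∀ R ∈ {R : Profile X n | ∃ x, SCWinner R x}, (f R).Nonempty) :
    (GIIAon {R : Profile X n | ∃ x, SCWinner R x} f ∧
      MPT {R : Profile X n | ∃ x, SCWinner R x} f) ↔
    (∀ R ∈ {R : Profile X n | ∃ x, SCWinner R x}, ∀ x, SCWinner R x → f R = {x}) := by
  constructor
  · rintro ⟨hG, hM⟩ R hR x hx
    have key : ∀ y, y ≠ x → y ∉ f R := by
      intro y hyx
      let R' : Profile X n := fun i => (R i).raise (fun a => a = x ∨ a = y)
      have hag : ∀ i, (R i).1 x y ↔ (R' i).1 x y := by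
        intro i; simp [R', Ranking.raise]
      have htop : ∀ i, ∀ w : X, w ≠ x → w ≠ y → (R' i).1 x w ∧ (R' i).1 y w := by
        intro i w h1 h2; simp [R', Ranking.raise, h1, h2]
      have hlt := majority_congr hyx.symm hag (hx y hyx)
      have hR' : ∃ x, SCWinner R' x := ⟨x, scWinner_of_top_pair hn htop hlt⟩
      have hfR' : f R' = {x} := hM R' hR' x y hyx.symm htop hlt
      exact hG R' hR' R hR x y hyx.symm (fun i => (hag i).symm) (by simp [hfR'])
        (by simp [hfR', hyx])
    refine (hf R hR).subset_singleton_iff.1 fun y hy => ?_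
    by_contra hyx
    exact key y hyx hy
  · intro hS
    refine ⟨?_, ?_⟩
    · rintro R ⟨a, ha⟩ R' ⟨b, hb⟩ x y hxy hag hx - hy
      rw [hS R ⟨a, ha⟩ a ha, Set.mem_singleton_iff] at hx
      rw [hS R' ⟨b, hb⟩ b hb, Set.mem_singleton_iff] at hy
      subst hx hy
      exact lt_asymm (majority_congr hxy hag (ha y hxy.symm)) (hb x hxy)
    · intro R hR x y _ htop hlt
      exact hS R hR x (scWinner_of_top_pair hn htop hlt)
end

section
/- Let X be a set of alternatives with |X| = 3 and n = 6 states of nature. Let D*_WeakCondorcet be the set of preference profiles having a unique weak Condorcet-winner, and let f be the resolute choice function on D*_WeakCondorcet such that f(R) is the unique weak Condorcet-winner at R. Then f violates Global Independence of Irrelevant Alternatives: there exist profiles R, R' in D*_WeakCondorcet and distinct alternatives x,y such that R_i and R'_i agree on {x,y} for all i ∈ N(6), f(R) = {x} (so y ∉ f(R)), and yet f(R') = {y}. -/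
/-- The profile on `X` in which state `i` places the alternative `a` at position `u i (e a)`,
position `0` being the top. -/
def posProfile {X : Type*} {n : ℕ} (e : X ≃ Fin 3) (u : Fin n → Fin 3 → Fin 3)
    (hu : ∀ i, Function.Injective (u i)) : Profile X n := fun i =>
  ⟨fun a b => u i (e a) ≤ u i (e b),
    { refl := fun _ => le_refl _
      trans := fun _ _ _ => le_trans
      antisymm := fun _ _ h h' => e.injective (hu i (le_antisymm h h'))
      total := fun _ _ => le_total _ _ }⟩

/-- Being a weak Condorcet-winner of a position profile is a decidable count on `Fin 3`. -/
lemma wcWinner_posProfile {X : Type*} {n : ℕ} (e : X ≃ Fin 3) (u : Fin n → Fin 3 → Fin 3)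
    (hu : ∀ i, Function.Injective (u i)) (a : Fin 3) :
    WCWinner (posProfile e u hu) (e.symm a) ↔
      ∀ b : Fin 3, b ≠ a → n ≤ 2 * (Finset.univ.filter fun i => u i a ≤ u i b).card := by
  have key : ∀ b : Fin 3, Set.ncard {i : Fin n | (posProfile e u hu i).1 (e.symm a) (e.symm b)}
      = (Finset.univ.filter fun i => u i a ≤ u i b).card := by
    intro b
    rw [← Set.ncard_coe_finset]
    congr 1
    ext i
    simp [posProfile]
  unfold WCWinner
  rw [← e.symm.forall_congr_right]
  simp only [key, ne_eq, e.symm.injective.eq_iff]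

/-- Positions of `x = 0`, `y = 1`, `z = 2` in the profile whose unique winner is `x`. -/
def posX : Fin 6 → Fin 3 → Fin 3 :=
  ![![0, 2, 1], ![0, 2, 1], ![0, 2, 1], ![2, 1, 0], ![1, 0, 2], ![1, 0, 2]]

/-- Positions of `x = 0`, `y = 1`, `z = 2` in the profile whose unique winner is `y`. -/
def posY : Fin 6 → Fin 3 → Fin 3 :=
  ![![1, 2, 0], ![0, 1, 2], ![0, 1, 2], ![2, 0, 1], ![2, 0, 1], ![2, 0, 1]]

/-- with 3 alternatives and 6 states of nature, the resolute choice
function selecting the unique weak Condorcet-winner violates GIIA. -/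
theorem stmt_9 {X : Type*} [Fintype X] (hX : Fintype.card X = 3) :
    ∃ (R R' : Profile X 6) (x y : X), x ≠ y ∧
      (∀ i, (R i).1 x y ↔ (R' i).1 x y) ∧
      (WCWinner R x ∧ ∀ z, WCWinner R z → z = x) ∧
      (WCWinner R' y ∧ ∀ z, WCWinner R' z → z = y) := by
  have e : X ≃ Fin 3 := Fintype.equivFinOfCardEq hX
  have hX' : ∀ i, Function.Injective (posX i) := by decide
  have hY' : ∀ i, Function.Injective (posY i) := by decide
  refine ⟨posProfile e posX hX', posProfile e posY hY', e.symm 0, e.symm 1, by simp, ?_, ?_, ?_⟩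
  · have h : ∀ i, posX i 0 ≤ posX i 1 ↔ posY i 0 ≤ posY i 1 := by decide
    simpa [posProfile] using h
  · rw [← e.symm.forall_congr_right]
    simp only [wcWinner_posProfile, e.symm.injective.eq_iff]
    decide
  · rw [← e.symm.forall_congr_right]
    simp only [wcWinner_posProfile, e.symm.injective.eq_iff]
    decide
end

section
/- Let X be a set of alternatives with |X| = 4 and n = 4 states of nature. Let D_WeakCondorcet be the set of preference profiles having at least one weak Condorcet-winner, and let C be the choice function on D_WeakCondorcet assigning to each profile its set of weak Condorcet-winners. Then C violates Global Independence of Irrelevant Alternatives: there exist profiles R, R' in D_WeakCondorcet and distinct alternatives x,w such that R_i and R'_i agree on {x,w} for all i ∈ N(4), x ∈ C(R), w ∉ C(R), and yet w ∈ C(R'). -/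
/-- The ranking of `X` induced by an injective position map on labels: `a` is at least as good as
`b` when the label of `a` has the smaller position. -/
def rankingOfPos {X : Type*} (e : X ≃ Fin 4) (p : Fin 4 → Fin 4)
    (hp : Function.Injective p) : Ranking X :=
  ⟨fun a b => p (e a) ≤ p (e b),
    { refl := fun _ => le_refl _
      trans := fun _ _ _ => le_trans
      antisymm := fun _ _ h h' => e.injective (hp (le_antisymm h h'))
      total := fun _ _ => le_total _ _ }⟩

/-- For a profile given by position maps, being a weak Condorcet-winner is a decidable
statement about the labels. -/
lemma wcWinner_rankingOfPos_iff {X : Type*} (e : X ≃ Fin 4) (p : Fin 4 → Fin 4 → Fin 4)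
    (hp : ∀ i, Function.Injective (p i)) (k : Fin 4) :
    WCWinner (fun i => rankingOfPos e (p i) (hp i)) (e.symm k) ↔
      ∀ l : Fin 4, l ≠ k → 4 ≤ 2 * (Finset.univ.filter fun i => p i k ≤ p i l).card := by
  have key : ∀ l : Fin 4, Set.ncard {i : Fin 4 | p i k ≤ p i l} =
      (Finset.univ.filter fun i => p i k ≤ p i l).card := fun l => by
    rw [← Set.ncard_coe_finset]; simp
  constructor
  · intro h l hl
    have := h (e.symm l) (by simpa using hl)
    simpa [rankingOfPos, key] using this
  · intro h a ha
    have := h (e a) (fun hk => ha (by simp [← hk]))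
    simpa [rankingOfPos, key] using this

/-- Positions of the labels `x = 0, w = 1, y = 2, z = 3` in each state at `R`. -/
def posR : Fin 4 → Fin 4 → Fin 4 :=
  ![![0, 2, 1, 3], ![0, 2, 1, 3], ![2, 1, 0, 3], ![1, 0, 2, 3]]

/-- Positions of the labels `x = 0, w = 1, y = 2, z = 3` in each state at `R'`. -/
def posR' : Fin 4 → Fin 4 → Fin 4 :=
  ![![0, 1, 2, 3], ![0, 1, 2, 3], ![1, 0, 2, 3], ![1, 0, 2, 3]]

/-- with 4 alternatives and 4 states of nature, the choice
function selecting the set of weak Condorcet-winners violates GIIA. -/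
theorem stmt_10 {X : Type*} [Fintype X] (hX : Fintype.card X = 4) :
    ∃ (R R' : Profile X 4) (x w : X), x ≠ w ∧
      (∀ i, (R i).1 x w ↔ (R' i).1 x w) ∧
      WCWinner R x ∧ ¬ WCWinner R w ∧ WCWinner R' w := by
  let e : X ≃ Fin 4 := Fintype.equivFinOfCardEq hX
  have hR : ∀ i, Function.Injective (posR i) := by decide
  have hR' : ∀ i, Function.Injective (posR' i) := by decide
  refine ⟨fun i => rankingOfPos e (posR i) (hR i), fun i => rankingOfPos e (posR' i) (hR' i),
    e.symm 0, e.symm 1, by simp, ?_, ?_, ?_, ?_⟩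
  · simp only [rankingOfPos, Equiv.apply_symm_apply]
    decide
  · rw [wcWinner_rankingOfPos_iff]
    decide
  · rw [wcWinner_rankingOfPos_iff]
    decide
  · rw [wcWinner_rankingOfPos_iff]
    decide
end

section
/- Let X be a finite set of alternatives with |X| = m ≥ 3 and N(n) = {1,…,n} the set of states of nature. For any preference profile R, a Borda-winner at R cannot be a strict Condorcet-loser at R: if x is a strict Condorcet-loser at R, then there exists y ∈ X∖{x} with BS(y,R) > BS(x,R), so x does not maximize the Borda score. -/
open Classical in
/-- The pairwise tally: the number of states ranking `y` weakly above `z`. Since rankings are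
reflexive, `tally R y y = n`. -/
noncomputable def tally {X : Type*} {n : ℕ} (R : Profile X n) (y z : X) : ℕ :=
  ∑ i : Fin n, if (R i).1 y z then 1 else 0

theorem ncard_states_eq_tally {X : Type*} {n : ℕ} (R : Profile X n) (y z : X) :
    Set.ncard {i : Fin n | (R i).1 y z} = tally R y z := by
  classical
  simp [tally, Set.ncard_eq_toFinset_card']

/-- In one state, `m + 1 - rk y` counts the alternatives weakly below `y`: those weakly above
and those weakly below `y` cover `X` and share exactly `y`. -/
theorem card_succ_sub_rk {X : Type*} [Fintype X] (r : Ranking X) (y : X) :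
    Fintype.card X + 1 - rk r y = Set.ncard {z | r.1 y z} := by
  have hr := r.2
  have hunion : {z | r.1 z y} ∪ {z | r.1 y z} = Set.univ := by
    ext z
    simpa using hr.total z y
  have hinter : {z | r.1 z y} ∩ {z | r.1 y z} = {y} := by
    ext z
    constructor
    · rintro ⟨h₁, h₂⟩
      exact hr.antisymm _ _ h₁ h₂
    · rintro rfl
      exact ⟨hr.refl _, hr.refl _⟩
  have h := Set.ncard_union_add_ncard_inter {z | r.1 z y} {z | r.1 y z}
  rw [hunion, hinter, Set.ncard_univ, Set.ncard_singleton, Nat.card_eq_fintype_card] at h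
  unfold rk
  omega

theorem BS_eq_sum_tally {X : Type*} [Fintype X] {n : ℕ} (R : Profile X n) (y : X) :
    BS R y = ∑ z, tally R y z := by
  classical
  unfold BS tally
  rw [Finset.sum_comm]
  refine Finset.sum_congr rfl fun i _ => ?_
  rw [card_succ_sub_rk]
  simp [Set.ncard_eq_toFinset_card']

theorem tally_self {X : Type*} {n : ℕ} (R : Profile X n) (y : X) : tally R y y = n := by
  have h (i : Fin n) : (R i).1 y y := (R i).2.refl y
  simp [tally, h]

theorem tally_add_tally {X : Type*} {n : ℕ} (R : Profile X n) {y z : X} (hyz : y ≠ z) :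
    tally R y z + tally R z y = n := by
  classical
  unfold tally
  rw [← Finset.sum_add_distrib]
  have h (i : Fin n) : ((if (R i).1 y z then 1 else 0) + if (R i).1 z y then 1 else 0) = 1 := by
    have htot := (R i).2.total y z
    have hanti : (R i).1 y z → (R i).1 z y → y = z := (R i).2.antisymm y z
    split_ifs <;> tauto
  simp [h]

/-- The average Borda score is `(m + 1) n / 2`, stated without division. -/
theorem two_mul_sum_BS {X : Type*} [Fintype X] {n : ℕ} (R : Profile X n) :
    2 * ∑ y, BS R y = Fintype.card X * ((Fintype.card X + 1) * n) := by
  classical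
  have hswap : ∑ y, BS R y = ∑ y, ∑ z, tally R z y := by
    simp only [BS_eq_sum_tally]
    exact Finset.sum_comm
  have hpair (y z : X) : tally R y z + tally R z y = n + if y = z then n else 0 := by
    split_ifs with h
    · subst h
      rw [tally_self]
    · rw [tally_add_tally R h, add_zero]
  rw [two_mul]
  nth_rewrite 2 [hswap]
  simp only [BS_eq_sum_tally, ← Finset.sum_add_distrib, hpair]
  simp only [Finset.sum_add_distrib, Finset.sum_const, Finset.card_univ, smul_eq_mul,
    Finset.sum_ite_eq, Finset.mem_univ, if_true]
  ring

/-- A strict Condorcet-loser has Borda score strictly below the average. -/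
theorem two_mul_BS_lt_of_SCLoser {X : Type*} [Fintype X] {n : ℕ}
    (hX : 2 ≤ Fintype.card X) (R : Profile X n) (x : X) (hx : SCLoser R x) :
    2 * BS R x < (Fintype.card X + 1) * n := by
  classical
  have hlt (z : X) (hz : z ≠ x) : 2 * tally R x z < n := by
    have h₁ := hx z hz
    rw [ncard_states_eq_tally, ncard_states_eq_tally] at h₁
    have h₂ := tally_add_tally R hz
    omega
  have : Nontrivial X := Fintype.one_lt_card_iff_nontrivial.mp hX
  obtain ⟨z, hz⟩ := exists_ne x
  have hsum : ∑ z, 2 * tally R x z < ∑ z, (n + if x = z then n else 0) := by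
    refine Finset.sum_lt_sum (fun w _ => ?_) ⟨z, Finset.mem_univ z, ?_⟩
    · split_ifs with h
      · subst h
        rw [tally_self, two_mul]
      · exact (hlt w (Ne.symm h)).le
    · simpa [hz.symm] using hlt z hz
  rw [BS_eq_sum_tally, Finset.mul_sum]
  refine hsum.trans_eq ?_
  simp only [Finset.sum_add_distrib, Finset.sum_const, Finset.card_univ, smul_eq_mul,
    Finset.sum_ite_eq, Finset.mem_univ, if_true]
  ring

/-- a Borda-winner cannot be a strict Condorcet-loser: a strict
Condorcet-loser is Borda-beaten by some other alternative. -/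
theorem stmt_12 {X : Type*} [Fintype X] {n : ℕ} (hX : 3 ≤ Fintype.card X) (hn : 2 ≤ n)
    (R : Profile X n) (x : X) (hx : SCLoser R x) :
    ∃ y : X, y ≠ x ∧ BS R x < BS R y := by
  have hlow := two_mul_BS_lt_of_SCLoser (by omega) R x hx
  have havg := two_mul_sum_BS R
  by_contra! hmax
  have hle : ∑ y, BS R y ≤ Fintype.card X * BS R x := by
    have h := Finset.sum_le_card_nsmul Finset.univ (BS R) (BS R x) fun y _ => by
      by_cases hy : y = x
      · rw [hy]
      · exact hmax y hy
    simpa using h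
  have hmul := Nat.mul_lt_mul_of_pos_left hlow (show 0 < Fintype.card X by omega)
  linarith
end

section
/- Let X be a finite set of alternatives with |X| = m ≥ 3 and N(n) = {1,…,n} the set of states of nature. If x is a strict Condorcet-loser at a preference profile R, then the Borda score of x is strictly below the average Borda score: 2·BS(x,R) < n(m+1). -/
/-- The alternatives below `x` and those above `x` cover `X` and overlap in `x` alone. -/
lemma ncard_lower_add_rk {X : Type*} [Fintype X] (r : Ranking X) (x : X) :
    Set.ncard {y | r.1 x y} + rk r x = Fintype.card X + 1 := by
  have := r.2
  have hu : {y | r.1 x y} ∪ {y | r.1 y x} = Set.univ :=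
    Set.eq_univ_of_forall fun y => total_of r.1 x y
  have hi : {y | r.1 x y} ∩ {y | r.1 y x} = {x} := by
    ext y
    constructor
    · rintro ⟨h1, h2⟩
      exact antisymm_of r.1 h2 h1
    · rintro rfl
      exact ⟨refl_of r.1 y, refl_of r.1 y⟩
  have h := Set.ncard_union_add_ncard_inter {y | r.1 x y} {y | r.1 y x}
  rw [hu, hi, Set.ncard_univ, Set.ncard_singleton, Nat.card_eq_fintype_card] at h
  exact h.symm

lemma sum_ncard_comm {X ι : Type*} [Fintype X] [Fintype ι] (p : ι → X → Prop) :
    ∑ i, Set.ncard {y | p i y} = ∑ y, Set.ncard {i | p i y} := by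
  classical
  simp only [Set.ncard_eq_toFinset_card', Set.toFinset_ofPred, Finset.card_filter]
  exact Finset.sum_comm

/-- a strict Condorcet-loser has Borda score strictly below the
average Borda score `n(m+1)/2`. -/
theorem stmt_13 {X : Type*} [Fintype X] {n : ℕ} (hX : 3 ≤ Fintype.card X) (hn : 2 ≤ n)
    (R : Profile X n) (x : X) (hx : SCLoser R x) :
    2 * BS R x < n * (Fintype.card X + 1) := by
  have hBS : BS R x = ∑ y, Set.ncard {i : Fin n | (R i).1 x y} := by
    rw [← sum_ncard_comm fun i y => (R i).1 x y]
    refine Finset.sum_congr rfl fun i _ => ?_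
    have := ncard_lower_add_rk (R i) x
    omega
  have hrk : ∑ i, rk (R i) x = ∑ y, Set.ncard {i : Fin n | (R i).1 y x} :=
    sum_ncard_comm fun i y => (R i).1 y x
  have htot : BS R x + ∑ i, rk (R i) x = n * (Fintype.card X + 1) := by
    rw [BS, ← Finset.sum_add_distrib, Finset.sum_congr rfl (g := fun _ => Fintype.card X + 1)]
    · simp
    · intro i _
      have := ncard_lower_add_rk (R i) x
      omega
  have hlt : BS R x < ∑ i, rk (R i) x := by
    rw [hBS, hrk]
    obtain ⟨y, hy⟩ := Fintype.exists_ne_of_one_lt_card (by omega) x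
    refine Finset.sum_lt_sum (fun z _ => ?_) ⟨y, Finset.mem_univ y, hx y hy⟩
    rcases eq_or_ne z x with rfl | hz
    · exact le_rfl
    · exact (hx z hz).le
  omega
end

section
/- Let X be a finite set of alternatives with |X| = m ≥ 3 and let N(n) = {1,…,n} with n ≥ 2 be the set of states of nature. Let f be the choice function on L^{N(n)} defined by f(R) = {the unique alternative that is ranked last (rank m) in state of nature 1 at R}. Then f satisfies Global Independence of Irrelevant Alternatives (GIIA) but violates the Weak Dominance Criterion (WDC). -/
theorem rk_eq_card_iff {X : Type*} [Fintype X] (r : Ranking X) (x : X) :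
    rk r x = Fintype.card X ↔ ∀ y, r.1 y x := by
  rw [rk, ← Nat.card_eq_fintype_card, ← Set.ncard_univ]
  constructor
  · intro h y
    have : {y | r.1 y x} = Set.univ :=
      Set.eq_of_subset_of_ncard_le (Set.subset_univ _) h.ge
    exact this.ge (Set.mem_univ y)
  · intro h
    rw [Set.eq_univ_of_forall (s := {y | r.1 y x}) h]

/-- The linear order of `Fin k` transported along an enumeration of `X` is a ranking,
and the alternative enumerated last is its bottom. -/
theorem exists_ranking_bottom (X : Type*) [Fintype X] [Nonempty X] :
    ∃ (r : Ranking X) (b : X), ∀ y, r.1 y b := by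
  let e := Fintype.equivFin X
  have hr : IsLinearOrder X (fun a b => e a ≤ e b) :=
    { refl := fun a => le_refl (e a)
      trans := fun _ _ _ => le_trans
      antisymm := fun _ _ h h' => e.injective (le_antisymm h h')
      total := fun a b => le_total (e a) (e b) }
  obtain ⟨b, hb⟩ := Finite.exists_max e
  exact ⟨⟨_, hr⟩, b, hb⟩

/-- the choice function selecting the alternative ranked last in
the first state of nature satisfies GIIA but violates WDC. -/
theorem stmt_14 {X : Type*} [Fintype X] {n : ℕ} (hX : 3 ≤ Fintype.card X) (hn : 2 ≤ n)
    (f : Profile X n → Set X)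
    (hdef : ∀ R : Profile X n, f R = {x | rk (R ⟨0, by omega⟩) x = Fintype.card X}) :
    GIIA f ∧ ¬ WDC f := by
  have hmem : ∀ R x, x ∈ f R ↔ ∀ y, (R ⟨0, by omega⟩).1 y x := fun R x => by
    rw [hdef, Set.mem_ofPred_eq, rk_eq_card_iff]
  constructor
  · intro R R' x y hxy hagree hx _ hy
    rw [hmem] at hx hy
    have := (R ⟨0, by omega⟩).2
    exact hxy (antisymm_of (R ⟨0, by omega⟩).1 ((hagree _).2 (hy x)) (hx y))
  · intro hW
    have : Nontrivial X := Fintype.one_lt_card_iff_nontrivial.1 (by omega)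
    obtain ⟨r, b, hb⟩ := exists_ranking_bottom X
    obtain ⟨x, hx⟩ := exists_ne b
    exact hW x b hx (fun _ => r) (fun _ => hb x) ((hmem _ _).2 hb)
end
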